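/- Let N = 1. A map μ : C^1 → ℝ is an invariant and continuous valuation on C^1 if and only if there exist a continuous function φ_0 : [0,∞) → ℝ with φ_0(0) = 0 and a continuous function φ_1 : [0,∞) → ℝ with φ_1 ≡ 0 on [0,δ] for some δ > 0, such that μ(f) = φ_0(M(f)) + ∫_ℝ φ_1(f(x)) dx for every f ∈ C^1, where M(f) is the maximum of f on ℝ (with M(0) = 0) and the integral is with respect to the Lebesgue measure on ℝ. -/

import Mathlib

open Filter Topology MeasureTheory

noncomputable section

/-- A function `f : ℝ → ℝ` is quasi-concave if it is nonnegative and all its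
superlevel sets `{x | t ≤ f x}` for `t > 0` are empty or compact and convex. -/
def QuasiConcave1 (f : ℝ → ℝ) : Prop :=
  (∀ x, 0 ≤ f x) ∧
  ∀ t : ℝ, 0 < t →
    {x | t ≤ f x} = ∅ ∨ (IsCompact {x | t ≤ f x} ∧ Convex ℝ {x | t ≤ f x})

/-- `μ` is a valuation on `C^1`: it vanishes on the zero function and satisfies the
inclusion-exclusion property with respect to pointwise max and min. -/
def IsValuation1 (μ : (ℝ → ℝ) → ℝ) : Prop :=
  μ (fun _ => 0) = 0 ∧
  ∀ f g : ℝ → ℝ, QuasiConcave1 f → QuasiConcave1 g →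
    QuasiConcave1 (fun x => max (f x) (g x)) →
    μ (fun x => max (f x) (g x)) + μ (fun x => min (f x) (g x)) = μ f + μ g

/-- `μ` is invariant under rigid motions (isometries) of `ℝ`. -/
def IsInvariantVal1 (μ : (ℝ → ℝ) → ℝ) : Prop :=
  ∀ (T : ℝ ≃ᵢ ℝ) (f : ℝ → ℝ), QuasiConcave1 f → μ (fun x => f (T x)) = μ f

/-- `μ` is continuous: it preserves limits of monotone pointwise convergent sequences
of quasi-concave functions. -/
def IsContinuousVal1 (μ : (ℝ → ℝ) → ℝ) : Prop :=
  ∀ (fi : ℕ → ℝ → ℝ) (f : ℝ → ℝ),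
    (∀ i, QuasiConcave1 (fi i)) → QuasiConcave1 f →
    (Monotone fi ∨ Antitone fi) →
    (∀ x, Tendsto (fun i => fi i x) atTop (𝓝 (f x))) →
    Tendsto (fun i => μ (fi i)) atTop (𝓝 (μ f))

/-- `μ` is monotone increasing: `f ≤ g` pointwise implies `μ f ≤ μ g`. -/
def IsMonotoneVal1 (μ : (ℝ → ℝ) → ℝ) : Prop :=
  ∀ f g : ℝ → ℝ, QuasiConcave1 f → QuasiConcave1 g → (∀ x, f x ≤ g x) → μ f ≤ μ g

/-!
Additivity and translation invariance force `l ↦ μ (t·I_[0,l]) - μ (t·I_{0})` to be additive, hence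
linear by continuity, so that `μ (t·I_[a,b]) = φ₀ t + (b - a) φ₁ t`. A quasi-concave function is an
increasing limit of finite maxima of step functions on nested superlevel sets, on which
inclusion–exclusion determines `μ`; therefore `μ` is determined by `φ₀` and `φ₁`.

The function `φ₁` must vanish near zero: otherwise there are heights `t n ↓ 0` with `φ₁ (t n) ≠ 0`.
In a staircase whose `n`-th step has height `t n` and width `1 / |φ₁ (t n)|`, the truncation after
`n` steps increases to a quasi-concave function, while each further step changes `μ` by `±1`.
-/

open Set

/-! ### Quasi-concave functions -/

namespace QuasiConcave1

variable {f g : ℝ → ℝ}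

theorem of_forall_isCompact_convex (h₀ : ∀ x, 0 ≤ f x)
    (h : ∀ t, 0 < t → IsCompact {x | t ≤ f x} ∧ Convex ℝ {x | t ≤ f x}) : QuasiConcave1 f :=
  ⟨h₀, fun t ht => .inr (h t ht)⟩

theorem zero : QuasiConcave1 0 :=
  ⟨fun _ => le_rfl, fun _ ht => .inl <| eq_empty_of_forall_notMem fun _ => ht.not_ge⟩

theorem isCompact_superlevel (hf : QuasiConcave1 f) {t : ℝ} (ht : 0 < t) :
    IsCompact {x | t ≤ f x} :=
  (hf.2 t ht).elim (fun h => h ▸ isCompact_empty) And.left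

theorem convex_superlevel (hf : QuasiConcave1 f) {t : ℝ} (ht : 0 < t) :
    Convex ℝ {x | t ≤ f x} :=
  (hf.2 t ht).elim (fun h => h ▸ convex_empty) And.right

theorem upperSemicontinuous (hf : QuasiConcave1 f) : UpperSemicontinuous f := by
  refine upperSemicontinuous_iff_isClosed_preimage.2 fun t => ?_
  rcases le_or_gt t 0 with ht | ht
  · have huniv : f ⁻¹' Ici t = univ := eq_univ_of_forall fun x => ht.trans (hf.1 x)
    exact huniv ▸ isClosed_univ
  · exact (hf.isCompact_superlevel ht).isClosed

theorem measurable (hf : QuasiConcave1 f) : Measurable f :=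
  hf.upperSemicontinuous.measurable

theorem inf (hf : QuasiConcave1 f) (hg : QuasiConcave1 g) : QuasiConcave1 (f ⊓ g) := by
  refine of_forall_isCompact_convex (fun x => le_min (hf.1 x) (hg.1 x)) fun t ht => ?_
  have hinter : {x | t ≤ (f ⊓ g) x} = {x | t ≤ f x} ∩ {x | t ≤ g x} := by ext; simp
  rw [hinter]
  exact ⟨(hf.isCompact_superlevel ht).inter (hg.isCompact_superlevel ht),
    (hf.convex_superlevel ht).inter (hg.convex_superlevel ht)⟩

theorem sup_of_forall_le {x₀ : ℝ} (hf : QuasiConcave1 f) (hg : QuasiConcave1 g)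
    (hfx : ∀ x, f x ≤ f x₀) (hgx : ∀ x, g x ≤ g x₀) : QuasiConcave1 (f ⊔ g) := by
  refine of_forall_isCompact_convex (fun x => le_max_of_le_left (hf.1 x)) fun t ht => ?_
  have hunion : {x | t ≤ (f ⊔ g) x} = {x | t ≤ f x} ∪ {x | t ≤ g x} := by ext; simp
  rw [hunion]
  refine ⟨(hf.isCompact_superlevel ht).union (hg.isCompact_superlevel ht), ?_⟩
  rcases eq_empty_or_nonempty {x | t ≤ f x} with hf₀ | ⟨x, hx⟩
  · simpa only [hf₀, empty_union] using hg.convex_superlevel ht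
  rcases eq_empty_or_nonempty {x | t ≤ g x} with hg₀ | ⟨y, hy⟩
  · simpa only [hg₀, union_empty] using hf.convex_superlevel ht
  exact Real.convex_iff_isPreconnected.2 <|
    IsPreconnected.union x₀ (le_trans hx (hfx x)) (le_trans hy (hgx y))
      (hf.convex_superlevel ht).isPreconnected (hg.convex_superlevel ht).isPreconnected

theorem comp_homeomorph (hf : QuasiConcave1 f) (e : ℝ ≃ₜ ℝ) :
    QuasiConcave1 fun x => f (e x) :=
  of_forall_isCompact_convex (fun _ => hf.1 _) fun _ ht =>
    ⟨e.isCompact_preimage.2 (hf.isCompact_superlevel ht), Real.convex_iff_isPreconnected.2 <|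
      e.isPreconnected_preimage.2 (hf.convex_superlevel ht).isPreconnected⟩

theorem of_forall_exists_le_sup (h₀ : ∀ x, 0 ≤ f x)
    (h : ∀ ε > 0, ∃ g, QuasiConcave1 g ∧ ∀ x, g x ≤ f x ∧ f x ≤ max (g x) ε) :
    QuasiConcave1 f := by
  refine of_forall_isCompact_convex h₀ fun t ht => ?_
  obtain ⟨g, hg, hgf⟩ := h (t / 2) (half_pos ht)
  have hlevel : {x | t ≤ f x} = {x | t ≤ g x} := by
    ext x
    refine ⟨fun hx => ?_, fun hx => le_trans hx (hgf x).1⟩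
    exact (le_max_iff.1 (le_trans hx (hgf x).2)).resolve_right (half_lt_self ht).not_ge
  exact hlevel ▸ ⟨hg.isCompact_superlevel ht, hg.convex_superlevel ht⟩

/-! ### The maximum of a quasi-concave function -/

theorem exists_forall_le (hf : QuasiConcave1 f) : ∃ x₀, ∀ x, f x ≤ f x₀ := by
  by_cases! hpos : ∃ y, 0 < f y
  · obtain ⟨y, hy⟩ := hpos
    obtain ⟨x₀, hx₀, hmax⟩ := (hf.upperSemicontinuous.upperSemicontinuousOn _).exists_isMaxOn
      ⟨y, le_refl (f y)⟩ (hf.isCompact_superlevel hy)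
    exact ⟨x₀, fun x => (le_total (f y) (f x)).elim (fun hx => hmax hx) fun hx => hx.trans hx₀⟩
  · exact ⟨0, fun x => (hpos x).trans (hf.1 0)⟩

theorem bddAbove_range (hf : QuasiConcave1 f) : BddAbove (range f) :=
  let ⟨x₀, h⟩ := hf.exists_forall_le
  ⟨f x₀, forall_mem_range.2 h⟩

theorem le_iSup (hf : QuasiConcave1 f) (x : ℝ) : f x ≤ ⨆ x, f x :=
  le_ciSup hf.bddAbove_range x

theorem exists_eq_iSup (hf : QuasiConcave1 f) : ∃ x₀, f x₀ = ⨆ x, f x :=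
  hf.exists_forall_le.imp fun x₀ h => le_antisymm (hf.le_iSup x₀) (ciSup_le h)

theorem iSup_nonneg (hf : QuasiConcave1 f) : 0 ≤ ⨆ x, f x :=
  Real.iSup_nonneg hf.1

theorem iSup_sup (hf : QuasiConcave1 f) (hg : QuasiConcave1 g) :
    ⨆ x, (f ⊔ g) x = max (⨆ x, f x) (⨆ x, g x) :=
  ciSup_sup_eq hf.bddAbove_range hg.bddAbove_range

/-- With `m` the right-hand side, the superlevel set `{m ≤ f ⊔ g}` is connected and covered by the
closed sets `{m ≤ f}` and `{m ≤ g}`, so these two meet. -/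
theorem iSup_inf (hf : QuasiConcave1 f) (hg : QuasiConcave1 g) (hfg : QuasiConcave1 (f ⊔ g)) :
    ⨆ x, (f ⊓ g) x = min (⨆ x, f x) (⨆ x, g x) := by
  refine le_antisymm (ciSup_le fun x => min_le_min (hf.le_iSup x) (hg.le_iSup x)) ?_
  obtain ⟨x, hx⟩ := hf.exists_eq_iSup
  obtain ⟨y, hy⟩ := hg.exists_eq_iSup
  rw [← hx, ← hy]
  have hmf := min_le_left (f x) (g y)
  have hmg := min_le_right (f x) (g y)
  generalize min (f x) (g y) = m at hmf hmg ⊢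
  rcases le_or_gt m 0 with hm | hm
  · exact hm.trans (hf.inf hg).iSup_nonneg
  · obtain ⟨z, -, hzf, hzg⟩ := isPreconnected_closed_iff.1
      (hfg.convex_superlevel hm).isPreconnected {z | m ≤ f z} {z | m ≤ g z}
      (hf.isCompact_superlevel hm).isClosed (hg.isCompact_superlevel hm).isClosed
      (fun z (hz : m ≤ max (f z) (g z)) => le_max_iff.1 hz)
      ⟨x, le_max_of_le_left hmf, hmf⟩ ⟨y, le_max_of_le_right hmg, hmg⟩
    exact (le_min hzf hzg).trans ((hf.inf hg).le_iSup z)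

section Limits

variable {F : ℕ → ℝ → ℝ}

theorem exists_iSup_lt_of_antitone (hF : ∀ n, QuasiConcave1 (F n)) (hf : QuasiConcave1 f)
    (hanti : Antitone F) (hlim : ∀ x, Tendsto (fun n => F n x) atTop (𝓝 (f x))) {c : ℝ}
    (hc : ⨆ x, f x < c) : ∃ n, ⨆ x, F n x < c := by
  by_contra! hle
  have hc₀ : 0 < c := hf.iSup_nonneg.trans_lt hc
  have hnonempty (n : ℕ) : {x | c ≤ F n x}.Nonempty := by
    obtain ⟨x, hx⟩ := (hF n).exists_eq_iSup
    exact ⟨x, (hle n).trans_eq hx.symm⟩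
  obtain ⟨x, hx⟩ := IsCompact.nonempty_iInter_of_sequence_nonempty_isCompact_isClosed
    (fun n => {x | c ≤ F n x}) (fun n x hx => le_trans hx (hanti n.le_succ x)) hnonempty
    ((hF 0).isCompact_superlevel hc₀) fun n => ((hF n).isCompact_superlevel hc₀).isClosed
  have hcx : c ≤ f x := ge_of_tendsto' (hlim x) fun n => mem_iInter.1 hx n
  exact (hcx.trans (hf.le_iSup x)).not_gt hc

theorem tendsto_iSup (hF : ∀ n, QuasiConcave1 (F n)) (hf : QuasiConcave1 f)
    (hmono : Monotone F ∨ Antitone F)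
    (hlim : ∀ x, Tendsto (fun n => F n x) atTop (𝓝 (f x))) :
    Tendsto (fun n => ⨆ x, F n x) atTop (𝓝 (⨆ x, f x)) := by
  refine tendsto_order.2 ⟨fun a ha => ?_, fun c hc => ?_⟩
  · obtain ⟨x, hx⟩ := hf.exists_eq_iSup
    exact ((hlim x).eventually_const_lt (hx ▸ ha)).mono fun n hn => hn.trans_le ((hF n).le_iSup x)
  rcases hmono with hmono | hanti
  · have hle := hmono.ge_of_tendsto (tendsto_pi_nhds.2 hlim)
    exact .of_forall fun n => (ciSup_mono hf.bddAbove_range (hle n)).trans_lt hc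
  · obtain ⟨N, hN⟩ := exists_iSup_lt_of_antitone hF hf hanti hlim hc
    filter_upwards [eventually_ge_atTop N] with n hn
    exact (ciSup_mono (hF N).bddAbove_range (hanti hn)).trans_lt hN

theorem exists_forall_le_of_tendsto (hF : ∀ n, QuasiConcave1 (F n)) (hf : QuasiConcave1 f)
    (hmono : Monotone F ∨ Antitone F)
    (hlim : ∀ x, Tendsto (fun n => F n x) atTop (𝓝 (f x))) :
    ∃ g, QuasiConcave1 g ∧ ∀ n x, F n x ≤ g x := by
  rcases hmono with hmono | hanti
  · exact ⟨f, hf, hmono.ge_of_tendsto (tendsto_pi_nhds.2 hlim)⟩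
  · exact ⟨F 0, hF 0, fun n => hanti n.zero_le⟩

end Limits

end QuasiConcave1

/-! ### Valuations of the form `φ₀ (max f) + ∫ φ₁ ∘ f` -/

section Closure

variable {μ ν : (ℝ → ℝ) → ℝ}

theorem IsValuation1.sup_add_inf (hμ : IsValuation1 μ) {f g : ℝ → ℝ} (hf : QuasiConcave1 f)
    (hg : QuasiConcave1 g) (hfg : QuasiConcave1 (f ⊔ g)) :
    μ (f ⊔ g) + μ (f ⊓ g) = μ f + μ g :=
  hμ.2 f g hf hg hfg

theorem IsValuation1.add (hμ : IsValuation1 μ) (hν : IsValuation1 ν) : IsValuation1 (μ + ν) :=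
  ⟨by simp only [Pi.add_apply, hμ.1, hν.1, add_zero], fun f g hf hg hfg => by
    simp only [Pi.add_apply]; linarith [hμ.2 f g hf hg hfg, hν.2 f g hf hg hfg]⟩

theorem IsInvariantVal1.add (hμ : IsInvariantVal1 μ) (hν : IsInvariantVal1 ν) :
    IsInvariantVal1 (μ + ν) :=
  fun T f hf => congrArg₂ (· + ·) (hμ T f hf) (hν T f hf)

theorem IsContinuousVal1.add (hμ : IsContinuousVal1 μ) (hν : IsContinuousVal1 ν) :
    IsContinuousVal1 (μ + ν) :=
  fun F f hF hf hmono hlim => (hμ F f hF hf hmono hlim).add (hν F f hF hf hmono hlim)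

theorem IsValuation1.congr (hμ : IsValuation1 μ) (h : ∀ f, QuasiConcave1 f → ν f = μ f) :
    IsValuation1 ν := by
  refine ⟨(h _ .zero).trans hμ.1, fun f g hf hg hfg => ?_⟩
  have hsup : ν (f ⊔ g) = μ (f ⊔ g) := h _ hfg
  have hinf : ν (f ⊓ g) = μ (f ⊓ g) := h _ (hf.inf hg)
  rw [h f hf, h g hg, ← hμ.sup_add_inf hf hg hfg, ← hsup, ← hinf]
  rfl

theorem IsInvariantVal1.congr (hμ : IsInvariantVal1 μ)
    (h : ∀ f, QuasiConcave1 f → ν f = μ f) : IsInvariantVal1 ν :=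
  fun T f hf => (h _ (hf.comp_homeomorph T.toHomeomorph)).trans <|
    (hμ T f hf).trans (h f hf).symm

theorem IsContinuousVal1.congr (hμ : IsContinuousVal1 μ)
    (h : ∀ f, QuasiConcave1 f → ν f = μ f) : IsContinuousVal1 ν :=
  fun F f hF hf hmono hlim => by
    simpa only [h _ (hF _), h f hf] using hμ F f hF hf hmono hlim

end Closure

section MaximumTerm

variable {φ : ℝ → ℝ}

theorem tendsto_comp_of_continuousOn_Ici (hφ : ContinuousOn φ (Ici 0)) {ι : Type*} {l : Filter ι}
    {u : ι → ℝ} {a : ℝ} (hu : ∀ i, 0 ≤ u i) (ha : 0 ≤ a) (hlim : Tendsto u l (𝓝 a)) :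
    Tendsto (fun i => φ (u i)) l (𝓝 (φ a)) :=
  (hφ a ha).tendsto.comp (tendsto_nhdsWithin_iff.2 ⟨hlim, .of_forall hu⟩)

theorem isValuation1_comp_iSup (h₀ : φ 0 = 0) : IsValuation1 fun f => φ (⨆ x, f x) := by
  refine ⟨by simp only [ciSup_const, h₀], fun f g hf hg hfg => ?_⟩
  exact (congrArg₂ (φ · + φ ·) (hf.iSup_sup hg) (hf.iSup_inf hg hfg)).trans
    (fn_max_add_fn_min φ _ _)

theorem isInvariantVal1_comp_iSup (φ : ℝ → ℝ) : IsInvariantVal1 fun f => φ (⨆ x, f x) :=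
  fun T f _ => congrArg φ (T.surjective.iSup_comp f)

theorem isContinuousVal1_comp_iSup (hφ : ContinuousOn φ (Ici 0)) :
    IsContinuousVal1 fun f => φ (⨆ x, f x) :=
  fun _ _ hF hf hmono hlim => tendsto_comp_of_continuousOn_Ici hφ (fun n => (hF n).iSup_nonneg)
    hf.iSup_nonneg (QuasiConcave1.tendsto_iSup hF hf hmono hlim)

end MaximumTerm

section IntegralTerm

variable {φ : ℝ → ℝ} {δ : ℝ}

theorem measurable_comp_of_continuousOn_Ici (hφ : ContinuousOn φ (Ici 0)) {α : Type*}
    [MeasurableSpace α] {f : α → ℝ} (hf : Measurable f) (hf₀ : ∀ x, 0 ≤ f x) :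
    Measurable fun x => φ (f x) :=
  hφ.domRestrict.measurable.comp (hf.subtype_mk (h := hf₀))

theorem QuasiConcave1.exists_integrable_bound {f : ℝ → ℝ} (hf : QuasiConcave1 f)
    (hφ : ContinuousOn φ (Ici 0)) (hδ : 0 < δ) (hφδ : ∀ t ∈ Icc 0 δ, φ t = 0) :
    ∃ B : ℝ → ℝ, Integrable B ∧ ∀ x, ∀ s ∈ Icc 0 (f x), ‖φ s‖ ≤ B x := by
  obtain ⟨C, hC⟩ := (isCompact_Icc (a := (0 : ℝ)) (b := ⨆ x, f x)).exists_bound_of_continuousOn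
    (hφ.mono Icc_subset_Ici_self)
  have hcompact := hf.isCompact_superlevel hδ
  refine ⟨{x | δ ≤ f x}.indicator fun _ => C, ?_, fun x s hs => ?_⟩
  · exact (integrable_indicator_iff hcompact.measurableSet).2
      (integrableOn_const hcompact.measure_lt_top.ne)
  · by_cases hx : δ ≤ f x
    · rw [indicator_of_mem (by exact hx)]
      exact hC s ⟨hs.1, hs.2.trans (hf.le_iSup x)⟩
    · rw [indicator_of_notMem (by exact hx), hφδ s ⟨hs.1, hs.2.trans (not_le.1 hx).le⟩, norm_zero]

theorem QuasiConcave1.integrable_comp {f : ℝ → ℝ} (hf : QuasiConcave1 f)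
    (hφ : ContinuousOn φ (Ici 0)) (hδ : 0 < δ) (hφδ : ∀ t ∈ Icc 0 δ, φ t = 0) :
    Integrable fun x => φ (f x) := by
  obtain ⟨B, hB, hφB⟩ := hf.exists_integrable_bound hφ hδ hφδ
  exact hB.mono' (measurable_comp_of_continuousOn_Ici hφ hf.measurable hf.1).aestronglyMeasurable
    (.of_forall fun x => hφB x _ ⟨hf.1 x, le_rfl⟩)

theorem isValuation1_integral_comp (hφ : ContinuousOn φ (Ici 0)) (hδ : 0 < δ)
    (hφδ : ∀ t ∈ Icc 0 δ, φ t = 0) : IsValuation1 fun f => ∫ x, φ (f x) := by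
  refine ⟨by simp only [hφδ 0 ⟨le_rfl, hδ.le⟩, integral_zero], fun f g hf hg hfg => ?_⟩
  have hint {k : ℝ → ℝ} (hk : QuasiConcave1 k) := hk.integrable_comp hφ hδ hφδ
  calc (∫ x, φ (max (f x) (g x))) + ∫ x, φ (min (f x) (g x))
      = ∫ x, φ (max (f x) (g x)) + φ (min (f x) (g x)) :=
        (integral_add (hint hfg) (hint (hf.inf hg))).symm
    _ = ∫ x, φ (f x) + φ (g x) := by simp only [fn_max_add_fn_min]
    _ = (∫ x, φ (f x)) + ∫ x, φ (g x) := integral_add (hint hf) (hint hg)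

theorem isInvariantVal1_integral_comp (φ : ℝ → ℝ) :
    IsInvariantVal1 fun f => ∫ x, φ (f x) := fun T f _ => by
  have hT : MeasurePreserving T := by
    simpa only [hausdorffMeasure_real] using T.measurePreserving_hausdorffMeasure 1
  exact hT.integral_comp T.toHomeomorph.measurableEmbedding fun x => φ (f x)

theorem isContinuousVal1_integral_comp (hφ : ContinuousOn φ (Ici 0)) (hδ : 0 < δ)
    (hφδ : ∀ t ∈ Icc 0 δ, φ t = 0) : IsContinuousVal1 fun f => ∫ x, φ (f x) := by
  intro F f hF hf hmono hlim
  obtain ⟨g, hg, hFg⟩ := QuasiConcave1.exists_forall_le_of_tendsto hF hf hmono hlim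
  obtain ⟨B, hB, hφB⟩ := hg.exists_integrable_bound hφ hδ hφδ
  exact tendsto_integral_of_dominated_convergence B
    (fun n => ((hF n).integrable_comp hφ hδ hφδ).aestronglyMeasurable) hB
    (fun n => .of_forall fun x => hφB x _ ⟨(hF n).1 x, hFg n x⟩)
    (.of_forall fun x => tendsto_comp_of_continuousOn_Ici hφ (fun n => (hF n).1 x) (hf.1 x)
      (hlim x))

end IntegralTerm

/-! ### Step functions -/

/-- The step function `t·I_K` of the paper, equal to `t` on `K` and to `0` elsewhere. -/
def stepFun (t : ℝ) (K : Set ℝ) : ℝ → ℝ :=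
  K.indicator fun _ => t

section StepFun

variable {s t : ℝ} {K : Set ℝ} {x : ℝ}

theorem stepFun_of_mem (hx : x ∈ K) : stepFun t K x = t :=
  indicator_of_mem hx _

theorem stepFun_of_notMem (hx : x ∉ K) : stepFun t K x = 0 :=
  indicator_of_notMem hx _

theorem stepFun_zero (K : Set ℝ) : stepFun 0 K = 0 :=
  indicator_zero ℝ K

theorem stepFun_nonneg (ht : 0 ≤ t) (x : ℝ) : 0 ≤ stepFun t K x :=
  indicator_apply_nonneg fun _ => ht

theorem stepFun_le (ht : 0 ≤ t) (x : ℝ) : stepFun t K x ≤ t :=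
  indicator_le_self' (fun _ _ => ht) x

theorem stepFun_inf_stepFun (ht : 0 ≤ t) (hs : 0 ≤ s) (K L : Set ℝ) :
    stepFun t K ⊓ stepFun s L = stepFun (min t s) (K ∩ L) := by
  ext x
  by_cases hK : x ∈ K <;> by_cases hL : x ∈ L <;> simp [stepFun, hK, hL, ht, hs]

theorem stepFun_sup_stepFun_same (ht : 0 ≤ t) (K L : Set ℝ) :
    stepFun t K ⊔ stepFun t L = stepFun t (K ∪ L) := by
  ext x
  by_cases hK : x ∈ K <;> by_cases hL : x ∈ L <;> simp [stepFun, hK, hL, ht]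

theorem stepFun_comp_add_right (t a b c : ℝ) :
    (fun x => stepFun t (Icc a b) (x + c)) = stepFun t (Icc (a - c) (b - c)) := by
  ext x
  simp only [stepFun, indicator, mem_Icc, sub_le_iff_le_add, le_sub_iff_add_le]

theorem quasiConcave1_stepFun (ht : 0 ≤ t) (hK : IsCompact K) (hconv : Convex ℝ K) :
    QuasiConcave1 (stepFun t K) := by
  refine ⟨stepFun_nonneg ht, fun s hs => ?_⟩
  rcases le_or_gt s t with hst | hts
  · have hlevel : {x | s ≤ stepFun t K x} = K := by
      ext x
      by_cases hx : x ∈ K <;> simp [stepFun, hx, hst, hs]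
    exact hlevel.symm ▸ .inr ⟨hK, hconv⟩
  · exact .inl <| eq_empty_of_forall_notMem fun x hx => (hts.trans_le hx).not_ge (stepFun_le ht x)

end StepFun

/-! ### Finite and countable suprema -/

section PartialSups

variable {F : ℕ → ℝ → ℝ}

theorem quasiConcave1_partialSups (hF : ∀ n, QuasiConcave1 (F n)) {x₀ : ℝ}
    (hx₀ : ∀ n x, F n x ≤ F n x₀) (n : ℕ) : QuasiConcave1 (partialSups F n) := by
  induction n with
  | zero => simpa only [partialSups_zero] using hF 0
  | succ n ih =>
    rw [partialSups_add_one]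
    refine ih.sup_of_forall_le (hF _) (fun x => ?_) (hx₀ _)
    simp only [Pi.partialSups_apply]
    exact partialSups_le_iff.2 fun i hi => (hx₀ i x).trans (le_partialSups_of_le (F · x₀) hi)

theorem quasiConcave1_iSup {t : ℕ → ℝ} (hF : ∀ n, QuasiConcave1 (partialSups F n))
    (hFt : ∀ n x, F n x ≤ t n) (ht : Tendsto t atTop (𝓝 0)) :
    QuasiConcave1 fun x => ⨆ n, F n x := by
  have hbdd (x : ℝ) : BddAbove (range fun n => F n x) :=
    .range_mono t (hFt · x) ht.bddAbove_range
  refine .of_forall_exists_le_sup (fun x => ?_) fun ε hε => ?_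
  · exact ((hF 0).1 x).trans (le_ciSup (hbdd x) 0)
  obtain ⟨N, hN⟩ := eventually_atTop.1 (ht.eventually_le_const hε)
  refine ⟨partialSups F N, hF N, fun x => ⟨?_, ciSup_le fun n => ?_⟩⟩
  · rw [Pi.partialSups_apply]
    exact partialSups_le_iff.2 fun n _ => le_ciSup (hbdd x) n
  rcases le_total n N with hn | hn
  · exact le_max_of_le_left (le_partialSups_of_le F hn x)
  · exact le_max_of_le_right ((hFt n x).trans (hN n hn))

theorem IsContinuousVal1.tendsto_partialSups {μ : (ℝ → ℝ) → ℝ} (hμ : IsContinuousVal1 μ)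
    {f : ℝ → ℝ} (hF : ∀ n, QuasiConcave1 (partialSups F n)) (hf : QuasiConcave1 f)
    (hlub : ∀ x, IsLUB (range fun n => F n x) (f x)) :
    Tendsto (fun n => μ (partialSups F n)) atTop (𝓝 (μ f)) := by
  refine hμ _ f hF hf (.inl (partialSups F).monotone) fun x => ?_
  refine tendsto_atTop_isLUB (fun m n hmn => (partialSups F).monotone hmn x) ?_
  simpa only [Pi.partialSups_apply, isLUB_congr (upperBounds_range_partialSups _)] using hlub x

end PartialSups

/-! ### Continuous valuations are determined by their values on step functions -/

theorem partialSups_inf_const {α : Type*} [DistribLattice α] (f : ℕ → α) (a : α) (n : ℕ) :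
    partialSups f n ⊓ a = partialSups (fun i => f i ⊓ a) n := by
  induction n with
  | zero => simp only [partialSups_zero]
  | succ n ih => rw [partialSups_add_one, partialSups_add_one, inf_sup_right, ih]

theorem QuasiConcave1.isLUB_stepFun_superlevel {f : ℝ → ℝ} (hf : QuasiConcave1 f) {q : ℕ → ℝ}
    (hq : range q = Ioo 0 (⨆ x, f x) ∩ range ((↑) : ℚ → ℝ)) (x : ℝ) :
    IsLUB (range fun n => stepFun (q n) {y | q n ≤ f y} x) (f x) := by
  have hq₀ (n : ℕ) : 0 ≤ q n := (hq.subset (mem_range_self n)).1.1.le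
  refine ⟨forall_mem_range.2 fun n => ?_, fun b hb => ?_⟩
  · exact indicator_apply_le' id fun _ => hf.1 x
  · have hb₀ : 0 ≤ b := (stepFun_nonneg (hq₀ 0) x).trans (hb (mem_range_self 0))
    by_contra! hbx
    obtain ⟨r, hbr, hrx⟩ := exists_rat_btwn hbx
    obtain ⟨n, hn⟩ : (r : ℝ) ∈ range q :=
      hq ▸ ⟨⟨hb₀.trans_lt hbr, hrx.trans_le (hf.le_iSup x)⟩, r, rfl⟩
    have hstep : stepFun (q n) {y | q n ≤ f y} x = r := by
      rw [stepFun_of_mem (by exact hn ▸ hrx.le), hn]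
    exact (hstep ▸ hb (mem_range_self n)).not_gt hbr

section Uniqueness

variable {μ ν : (ℝ → ℝ) → ℝ}

theorem quasiConcave1_partialSups_stepFun {t : ℕ → ℝ} {K : ℕ → Set ℝ} (ht : ∀ n, 0 ≤ t n)
    (hK : ∀ n, IsCompact (K n)) (hconv : ∀ n, Convex ℝ (K n)) {x₀ : ℝ} (hx₀ : ∀ n, x₀ ∈ K n)
    (n : ℕ) : QuasiConcave1 (partialSups (fun i => stepFun (t i) (K i)) n) :=
  quasiConcave1_partialSups (fun i => quasiConcave1_stepFun (ht i) (hK i) (hconv i))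
    (fun i x => (stepFun_le (ht i) x).trans_eq (stepFun_of_mem (hx₀ i)).symm) n

theorem IsValuation1.eq_on_partialSups_stepFun (hμ : IsValuation1 μ) (hν : IsValuation1 ν)
    (h : ∀ t K, 0 ≤ t → IsCompact K → Convex ℝ K → K.Nonempty →
      μ (stepFun t K) = ν (stepFun t K))
    {t : ℕ → ℝ} {K : ℕ → Set ℝ} (ht : ∀ n, 0 ≤ t n) (hK : ∀ n, IsCompact (K n))
    (hconv : ∀ n, Convex ℝ (K n)) {x₀ : ℝ} (hx₀ : ∀ n, x₀ ∈ K n) (n : ℕ) :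
    μ (partialSups (fun i => stepFun (t i) (K i)) n) =
      ν (partialSups (fun i => stepFun (t i) (K i)) n) := by
  induction n generalizing t K with
  | zero => simpa only [partialSups_zero] using h _ _ (ht 0) (hK 0) (hconv 0) ⟨x₀, hx₀ 0⟩
  | succ n ih =>
    have hF := quasiConcave1_partialSups_stepFun ht hK hconv hx₀
    have hstep := quasiConcave1_stepFun (ht (n + 1)) (hK (n + 1)) (hconv (n + 1))
    have hsup := partialSups_add_one (fun i => stepFun (t i) (K i)) n
    have hinf : μ (partialSups (fun i => stepFun (t i) (K i)) n ⊓ stepFun (t (n + 1)) (K (n + 1)))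
        = ν (partialSups (fun i => stepFun (t i) (K i)) n ⊓ stepFun (t (n + 1)) (K (n + 1))) := by
      simp only [partialSups_inf_const, stepFun_inf_stepFun (ht _) (ht (n + 1))]
      exact ih (fun i => le_min (ht i) (ht (n + 1))) (fun i => (hK i).inter (hK (n + 1)))
        (fun i => (hconv i).inter (hconv (n + 1))) fun i => ⟨hx₀ i, hx₀ (n + 1)⟩
    have hμadd := hμ.sup_add_inf (hF n) hstep (hsup ▸ hF (n + 1))
    have hνadd := hν.sup_add_inf (hF n) hstep (hsup ▸ hF (n + 1))
    rw [hsup]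
    linarith [ih ht hK hconv hx₀, h _ _ (ht (n + 1)) (hK _) (hconv _) ⟨x₀, hx₀ (n + 1)⟩]

theorem IsValuation1.eq_of_eq_on_stepFun (hμ : IsValuation1 μ) (hμc : IsContinuousVal1 μ)
    (hν : IsValuation1 ν) (hνc : IsContinuousVal1 ν)
    (h : ∀ t K, 0 ≤ t → IsCompact K → Convex ℝ K → K.Nonempty →
      μ (stepFun t K) = ν (stepFun t K))
    {f : ℝ → ℝ} (hf : QuasiConcave1 f) : μ f = ν f := by
  rcases hf.iSup_nonneg.eq_or_lt with hzero | hpos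
  · have hf₀ : f = fun _ => 0 :=
      funext fun x => le_antisymm (hzero ▸ hf.le_iSup x) (hf.1 x)
    rw [hf₀, hμ.1, hν.1]
  · obtain ⟨r, hr⟩ := exists_rat_btwn hpos
    obtain ⟨q, hq⟩ := ((countable_range ((↑) : ℚ → ℝ)).mono
      (inter_subset_right (s := Ioo 0 (⨆ x, f x)))).exists_eq_range ⟨r, hr, r, rfl⟩
    have hmem (n : ℕ) : q n ∈ Ioo 0 (⨆ x, f x) := (hq.superset (mem_range_self n)).1
    have hq₀ (n : ℕ) : 0 ≤ q n := (hmem n).1.le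
    have hK (n : ℕ) := hf.isCompact_superlevel (hmem n).1
    have hconv (n : ℕ) := hf.convex_superlevel (hmem n).1
    obtain ⟨x₀, hx₀⟩ := hf.exists_eq_iSup
    have hx₀K (n : ℕ) : x₀ ∈ {x | q n ≤ f x} := ((hmem n).2.trans_eq hx₀.symm).le
    have hF := quasiConcave1_partialSups_stepFun hq₀ hK hconv hx₀K
    have hlub := hf.isLUB_stepFun_superlevel hq.symm
    refine tendsto_nhds_unique (hμc.tendsto_partialSups hF hf hlub) ?_
    simpa only [hμ.eq_on_partialSups_stepFun hν h hq₀ hK hconv hx₀K] using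
      hνc.tendsto_partialSups hF hf hlub

end Uniqueness

/-! ### The values of a translation invariant continuous valuation on step functions -/

theorem continuousWithinAt_of_monotone_or_antitone {α β : Type*} [LinearOrder α]
    [TopologicalSpace α] [FirstCountableTopology α] [TopologicalSpace β] {F : α → β} {s : Set α}
    {a : α} (h : ∀ u : ℕ → α, (∀ n, u n ∈ s) → (Monotone u ∨ Antitone u) →
      Tendsto u atTop (𝓝 a) → Tendsto (F ∘ u) atTop (𝓝 (F a))) :
    ContinuousWithinAt F s a := by
  refine tendsto_of_seq_tendsto fun u hu => tendsto_of_subseq_tendsto fun k hk => ?_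
  obtain ⟨hlim, hmem⟩ := tendsto_nhdsWithin_iff.1 (hu.comp hk)
  obtain ⟨N, hN⟩ := eventually_atTop.1 hmem
  obtain ⟨m, hm⟩ := exists_increasing_or_nonincreasing_subseq (· ≤ ·) fun n => u (k (n + N))
  have hmN : Tendsto (fun n => m n + N) atTop atTop :=
    (tendsto_add_atTop_nat N).comp m.strictMono.tendsto_atTop
  refine ⟨fun n => m n + N, h (fun n => u (k (m n + N))) (fun n => hN _ (Nat.le_add_left _ _)) ?_
    (hlim.comp hmN)⟩
  refine hm.imp (fun hle => monotone_iff_forall_lt.2 hle) fun hnle => antitone_iff_forall_lt.2 ?_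
  exact fun i j hij => (not_le.1 (hnle i j hij)).le

theorem eq_smul_of_add_of_continuousWithinAt {E : Type*} [AddCommGroup E] [Module ℝ E]
    [TopologicalSpace E] [IsTopologicalAddGroup E] [ContinuousSMul ℝ E] [T2Space E] {g : ℝ → E}
    (hadd : ∀ x y, 0 ≤ x → 0 ≤ y → g (x + y) = g x + g y)
    (hg : ContinuousWithinAt g (Ici 0) 0) {x : ℝ} (hx : 0 ≤ x) : g x = x • g 1 := by
  have hg₀ : g 0 = 0 := by simpa only [add_zero, left_eq_add] using hadd 0 0 le_rfl le_rfl
  let G : ℝ →+ E := AddMonoidHom.mk' (fun x => g x⁺ - g x⁻) fun x y => by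
    have hparts : (x + y)⁺ + (x⁻ + y⁻) = (x + y)⁻ + (x⁺ + y⁺) := by
      linarith [posPart_sub_negPart x, posPart_sub_negPart y, posPart_sub_negPart (x + y)]
    have hgparts := congrArg g hparts
    simp only [hadd, posPart_nonneg, negPart_nonneg, add_nonneg] at hgparts
    rw [sub_add_sub_comm, sub_eq_sub_iff_add_eq_add, hgparts, add_comm]
  have hG_of_nonneg {y : ℝ} (hy : 0 ≤ y) : G y = g y := by
    simp only [G, AddMonoidHom.mk'_apply, posPart_of_nonneg hy, negPart_of_nonneg hy, hg₀, sub_zero]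
  have hG : Continuous G := by
    have hpos : Tendsto (fun x : ℝ => x⁺) (𝓝 0) (𝓝[≥] 0) := tendsto_nhdsWithin_iff.2
      ⟨continuous_posPart.tendsto' 0 0 posPart_zero, .of_forall posPart_nonneg⟩
    have hneg : Tendsto (fun x : ℝ => x⁻) (𝓝 0) (𝓝[≥] 0) := tendsto_nhdsWithin_iff.2
      ⟨continuous_negPart.tendsto' 0 0 negPart_zero, .of_forall negPart_nonneg⟩
    refine continuous_of_continuousAt_zero G ?_
    rw [ContinuousAt, map_zero, ← sub_self (g 0)]
    exact (hg.tendsto.comp hpos).sub (hg.tendsto.comp hneg)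
  simpa only [smul_eq_mul, mul_one, hG_of_nonneg hx, hG_of_nonneg zero_le_one] using
    map_real_smul G hG x 1

/-- Invariance of `μ` under translations only; unlike `IsInvariantVal1`, reflections are left
out. -/
def IsTranslationInvariant (μ : (ℝ → ℝ) → ℝ) : Prop :=
  ∀ (c : ℝ) (f : ℝ → ℝ), QuasiConcave1 f → μ (fun x => f (x + c)) = μ f

theorem IsInvariantVal1.isTranslationInvariant {μ : (ℝ → ℝ) → ℝ} (hμ : IsInvariantVal1 μ) :
    IsTranslationInvariant μ :=
  fun c f hf => hμ (IsometryEquiv.addRight c) f hf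

/-- The value of `μ` at `t·I_{0}`: the function `φ₀` of the representation. -/
def pointProfile (μ : (ℝ → ℝ) → ℝ) (t : ℝ) : ℝ :=
  μ (stepFun t {0})

/-- The increase of `μ` when the step `t·I_{0}` is widened to unit length: the function `φ₁` of the
representation. -/
def lengthProfile (μ : (ℝ → ℝ) → ℝ) (t : ℝ) : ℝ :=
  μ (stepFun t (Icc 0 1)) - pointProfile μ t

section StepValues

variable {μ : (ℝ → ℝ) → ℝ} {t a b : ℝ}

theorem quasiConcave1_stepFun_Icc (ht : 0 ≤ t) (a b : ℝ) :
    QuasiConcave1 (stepFun t (Icc a b)) :=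
  quasiConcave1_stepFun ht isCompact_Icc (convex_Icc a b)

theorem IsContinuousVal1.continuousOn_stepFun (hμ : IsContinuousVal1 μ) {K : Set ℝ}
    (hK : IsCompact K) (hconv : Convex ℝ K) : ContinuousOn (fun t => μ (stepFun t K)) (Ici 0) := by
  have hmono : Monotone fun t => stepFun t K := fun s t hst x => indicator_le_indicator hst
  refine fun t ht => continuousWithinAt_of_monotone_or_antitone fun u hu hmon hlim => ?_
  refine hμ (fun n => stepFun (u n) K) _ (fun n => quasiConcave1_stepFun (hu n) hK hconv)
    (quasiConcave1_stepFun ht hK hconv) (hmon.imp hmono.comp hmono.comp_antitone) fun x => ?_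
  by_cases hx : x ∈ K
  · simpa only [stepFun_of_mem hx] using hlim
  · simpa only [stepFun_of_notMem hx] using tendsto_const_nhds

theorem IsContinuousVal1.continuousWithinAt_stepFun_Icc (hμ : IsContinuousVal1 μ) (ht : 0 ≤ t) :
    ContinuousWithinAt (fun l => μ (stepFun t (Icc 0 l))) (Ici 0) 0 := by
  have hmono : Monotone fun l : ℝ => stepFun t (Icc 0 l) := fun l m hlm =>
    indicator_le_indicator_of_subset (Icc_subset_Icc_right hlm) fun _ => ht
  refine continuousWithinAt_of_monotone_or_antitone fun u hu hmon hlim => ?_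
  refine hμ (fun n => stepFun t (Icc 0 (u n))) _ (fun n => quasiConcave1_stepFun_Icc ht _ _)
    (quasiConcave1_stepFun_Icc ht _ _) (hmon.imp hmono.comp hmono.comp_antitone) fun x => ?_
  rcases le_or_gt x 0 with hx | hx
  · refine tendsto_const_nhds.congr fun n => ?_
    simp only [stepFun, indicator, mem_Icc, hx, hx.trans (hu n), and_true]
  · refine tendsto_const_nhds.congr' ?_
    filter_upwards [hlim.eventually_lt_const hx] with n hn
    rw [stepFun_of_notMem fun h => h.2.not_gt hx, stepFun_of_notMem fun h => h.2.not_gt hn]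

theorem continuousOn_pointProfile (hμ : IsContinuousVal1 μ) :
    ContinuousOn (pointProfile μ) (Ici 0) :=
  hμ.continuousOn_stepFun isCompact_singleton (convex_singleton 0)

theorem continuousOn_lengthProfile (hμ : IsContinuousVal1 μ) :
    ContinuousOn (lengthProfile μ) (Ici 0) :=
  (hμ.continuousOn_stepFun isCompact_Icc (convex_Icc 0 1)).sub (continuousOn_pointProfile hμ)

theorem IsValuation1.pointProfile_zero (hμ : IsValuation1 μ) : pointProfile μ 0 = 0 :=
  (congrArg μ (stepFun_zero _)).trans hμ.1

theorem IsValuation1.lengthProfile_zero (hμ : IsValuation1 μ) : lengthProfile μ 0 = 0 := by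
  rw [lengthProfile, hμ.pointProfile_zero, stepFun_zero, sub_zero]
  exact hμ.1

theorem IsTranslationInvariant.apply_stepFun_Icc (hμ : IsTranslationInvariant μ) (ht : 0 ≤ t)
    (a b : ℝ) : μ (stepFun t (Icc a b)) = μ (stepFun t (Icc 0 (b - a))) := by
  rw [← hμ a _ (quasiConcave1_stepFun_Icc ht a b), stepFun_comp_add_right, sub_self]

theorem IsTranslationInvariant.apply_stepFun_singleton (hμ : IsTranslationInvariant μ)
    (ht : 0 ≤ t) (a : ℝ) : μ (stepFun t {a}) = pointProfile μ t := by
  rw [← Icc_self a, hμ.apply_stepFun_Icc ht, sub_self, Icc_self, pointProfile]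

theorem IsValuation1.stepFun_Icc_add (hμ : IsValuation1 μ) (hinv : IsTranslationInvariant μ)
    (ht : 0 ≤ t) {l m : ℝ} (hl : 0 ≤ l) (hm : 0 ≤ m) :
    μ (stepFun t (Icc 0 (l + m))) + pointProfile μ t =
      μ (stepFun t (Icc 0 l)) + μ (stepFun t (Icc 0 m)) := by
  have hlm : l ≤ l + m := le_add_of_nonneg_right hm
  have hsup : stepFun t (Icc 0 l) ⊔ stepFun t (Icc l (l + m)) = stepFun t (Icc 0 (l + m)) := by
    rw [stepFun_sup_stepFun_same ht, Icc_union_Icc_eq_Icc hl hlm]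
  have hinf : stepFun t (Icc 0 l) ⊓ stepFun t (Icc l (l + m)) = stepFun t {l} := by
    rw [stepFun_inf_stepFun ht ht, min_self, Icc_inter_Icc_eq_singleton hl hlm]
  have hadd := hμ.sup_add_inf (quasiConcave1_stepFun_Icc ht 0 l)
    (quasiConcave1_stepFun_Icc ht l (l + m)) (hsup ▸ quasiConcave1_stepFun_Icc ht 0 (l + m))
  rwa [hsup, hinf, hinv.apply_stepFun_singleton ht, hinv.apply_stepFun_Icc ht l,
    add_sub_cancel_left] at hadd

theorem IsValuation1.apply_stepFun_Icc (hμ : IsValuation1 μ) (hinv : IsTranslationInvariant μ)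
    (hcont : IsContinuousVal1 μ) (ht : 0 ≤ t) (hab : a ≤ b) :
    μ (stepFun t (Icc a b)) = pointProfile μ t + (b - a) * lengthProfile μ t := by
  have hlinear : μ (stepFun t (Icc 0 (b - a))) - pointProfile μ t =
      (b - a) • lengthProfile μ t := by
    refine eq_smul_of_add_of_continuousWithinAt
      (g := fun l => μ (stepFun t (Icc 0 l)) - pointProfile μ t) (fun l m hl hm => ?_)
      ((hcont.continuousWithinAt_stepFun_Icc ht).sub continuousWithinAt_const) (sub_nonneg.2 hab)
    linarith [hμ.stepFun_Icc_add hinv ht hl hm]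
  rw [hinv.apply_stepFun_Icc ht, ← smul_eq_mul, ← hlinear, add_sub_cancel]

end StepValues

theorem iSup_stepFun_add_integral {φ₀ φ₁ : ℝ → ℝ} (hφ₁ : φ₁ 0 = 0) {t a b : ℝ} (ht : 0 ≤ t)
    (hab : a ≤ b) :
    φ₀ (⨆ x, stepFun t (Icc a b) x) + ∫ x, φ₁ (stepFun t (Icc a b) x) =
      φ₀ t + (b - a) * φ₁ t := by
  have hmax : ⨆ x, stepFun t (Icc a b) x = t := by
    refine le_antisymm (ciSup_le (stepFun_le ht)) ?_
    exact (stepFun_of_mem (left_mem_Icc.2 hab)).symm.trans_le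
      ((quasiConcave1_stepFun_Icc ht a b).le_iSup a)
  have hcomp : (fun x => φ₁ (stepFun t (Icc a b) x)) = (Icc a b).indicator fun _ => φ₁ t :=
    (indicator_comp_of_zero hφ₁).symm
  rw [hmax, hcomp, integral_indicator_const _ measurableSet_Icc, Real.volume_real_Icc_of_le hab,
    smul_eq_mul]

/-! ### The length profile vanishes near zero -/

section Staircase

variable {μ : (ℝ → ℝ) → ℝ} {t X : ℕ → ℝ}

theorem partialSups_stepFun_inf_succ (ht : Antitone t) (ht₀ : ∀ n, 0 ≤ t n) (hX : Monotone X)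
    (n : ℕ) :
    partialSups (fun i => stepFun (t i) (Icc 0 (X i))) n ⊓
        stepFun (t (n + 1)) (Icc 0 (X (n + 1))) =
      stepFun (t (n + 1)) (Icc 0 (X n)) := by
  have hinf {i : ℕ} (hi : i ≤ n) :
      stepFun (t i) (Icc 0 (X i)) ⊓ stepFun (t (n + 1)) (Icc 0 (X (n + 1))) =
        stepFun (t (n + 1)) (Icc 0 (X i)) := by
    have hin : i ≤ n + 1 := hi.trans n.le_succ
    rw [stepFun_inf_stepFun (ht₀ _) (ht₀ _), min_eq_right (ht hin),
      inter_eq_left.2 (Icc_subset_Icc_right (hX hin))]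
  rw [partialSups_inf_const]
  refine le_antisymm (partialSups_le_iff.2 fun i hi => ?_) ?_
  · exact (hinf hi).trans_le <|
      indicator_le_indicator_of_subset (Icc_subset_Icc_right (hX hi)) fun _ => ht₀ _
  · exact (hinf le_rfl).ge.trans (le_partialSups (fun i => stepFun (t i) (Icc 0 (X i)) ⊓ _) n)

theorem IsValuation1.tendsto_sub_mul_lengthProfile (hμ : IsValuation1 μ)
    (hinv : IsTranslationInvariant μ) (hcont : IsContinuousVal1 μ) (ht : Antitone t)
    (htlim : Tendsto t atTop (𝓝 0)) (hX : Monotone X) (hX₀ : 0 ≤ X 0) :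
    Tendsto (fun n => (X (n + 1) - X n) * lengthProfile μ (t (n + 1))) atTop (𝓝 0) := by
  have ht₀ (n : ℕ) : 0 ≤ t n := ht.le_of_tendsto htlim n
  have hXn (n : ℕ) : 0 ≤ X n := hX₀.trans (hX n.zero_le)
  let S (n : ℕ) : ℝ → ℝ := stepFun (t n) (Icc 0 (X n))
  have hS (n : ℕ) : QuasiConcave1 (S n) := quasiConcave1_stepFun_Icc (ht₀ n) _ _
  have hSt (n : ℕ) (x : ℝ) : S n x ≤ t n := stepFun_le (ht₀ n) x
  have hF (n : ℕ) : QuasiConcave1 (partialSups S n) :=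
    quasiConcave1_partialSups_stepFun ht₀ (fun _ => isCompact_Icc) (fun _ => convex_Icc _ _)
      (fun n => left_mem_Icc.2 (hXn n)) n
  have hincrement (n : ℕ) : μ (partialSups S (n + 1)) - μ (partialSups S n) =
      (X (n + 1) - X n) * lengthProfile μ (t (n + 1)) := by
    have hinf : partialSups S n ⊓ S (n + 1) = stepFun (t (n + 1)) (Icc 0 (X n)) :=
      partialSups_stepFun_inf_succ ht ht₀ hX n
    have hadd := hμ.sup_add_inf (hF n) (hS (n + 1)) (partialSups_add_one S n ▸ hF (n + 1))
    rw [← partialSups_add_one, hinf] at hadd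
    have hstep {l : ℝ} (hl : 0 ≤ l) := hμ.apply_stepFun_Icc hinv hcont (ht₀ (n + 1)) hl
    linarith [hstep (hXn n), hstep (hXn (n + 1))]
  have hlim := hcont.tendsto_partialSups hF (quasiConcave1_iSup hF hSt htlim) fun x =>
    isLUB_ciSup (.range_mono t (hSt · x) htlim.bddAbove_range)
  simpa only [hincrement, sub_self, Function.comp_apply] using
    (hlim.comp (tendsto_add_atTop_nat 1)).sub hlim

theorem IsValuation1.eventually_lengthProfile_eq_zero (hμ : IsValuation1 μ)
    (hinv : IsTranslationInvariant μ) (hcont : IsContinuousVal1 μ) :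
    ∀ᶠ t in 𝓝[>] 0, lengthProfile μ t = 0 := by
  by_contra hne
  have hfreq : ∃ᶠ t in 𝓝[>] 0, lengthProfile μ t ≠ 0 := not_eventually.1 hne
  have hglb : IsGLB {t | 0 < t ∧ lengthProfile μ t ≠ 0} 0 := by
    refine ⟨fun t ht => ht.1.le, fun b hb => ?_⟩
    by_contra! hb₀
    obtain ⟨t, ht, htpos, htb⟩ := (hfreq.and_eventually (Ioo_mem_nhdsGT hb₀)).exists
    exact (hb ⟨htpos, ht⟩).not_gt htb
  obtain ⟨t, ht, -, htlim, hmem⟩ := hglb.exists_seq_antitone_tendsto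
    ((hfreq.and_eventually self_mem_nhdsWithin).exists.imp fun t h => ⟨h.2, h.1⟩)
  have hX : Monotone fun n => ∑ i ∈ Finset.range n, |lengthProfile μ (t (i + 1))|⁻¹ :=
    monotone_nat_of_le_succ fun n => by
      simp only [Finset.sum_range_succ, le_add_iff_nonneg_right, inv_nonneg, abs_nonneg]
  have hincrement := (hμ.tendsto_sub_mul_lengthProfile hinv hcont ht htlim hX le_rfl).abs
  have hone (n : ℕ) : |lengthProfile μ (t (n + 1))| ≠ 0 := abs_ne_zero.2 (hmem (n + 1)).2
  simp only [Finset.sum_range_succ, add_sub_cancel_left, abs_mul, abs_inv, abs_abs,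
    inv_mul_cancel₀ (hone _), abs_zero] at hincrement
  exact one_ne_zero (tendsto_nhds_unique tendsto_const_nhds hincrement)

theorem IsValuation1.exists_lengthProfile_eq_zero (hμ : IsValuation1 μ)
    (hinv : IsTranslationInvariant μ) (hcont : IsContinuousVal1 μ) :
    ∃ δ > 0, ∀ t ∈ Icc 0 δ, lengthProfile μ t = 0 := by
  obtain ⟨δ, hδ, hzero⟩ := mem_nhdsGT_iff_exists_Ioc_subset.1
    (hμ.eventually_lengthProfile_eq_zero hinv hcont)
  refine ⟨δ, hδ, fun t ht => ?_⟩
  rcases ht.1.eq_or_lt with rfl | htpos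
  · exact hμ.lengthProfile_zero
  · exact hzero ⟨htpos, ht.2⟩

end Staircase

/-! ### The characterization -/

section Representation

variable {μ : (ℝ → ℝ) → ℝ} {φ₀ φ₁ : ℝ → ℝ} {δ : ℝ}

theorem isValuation1_representation (hφ₀ : φ₀ 0 = 0) (hφ₁ : ContinuousOn φ₁ (Ici 0))
    (hδ : 0 < δ) (hφδ : ∀ t ∈ Icc 0 δ, φ₁ t = 0) :
    IsValuation1 fun f => φ₀ (⨆ x, f x) + ∫ x, φ₁ (f x) :=
  (isValuation1_comp_iSup hφ₀).add (isValuation1_integral_comp hφ₁ hδ hφδ)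

theorem isInvariantVal1_representation (φ₀ φ₁ : ℝ → ℝ) :
    IsInvariantVal1 fun f => φ₀ (⨆ x, f x) + ∫ x, φ₁ (f x) :=
  (isInvariantVal1_comp_iSup φ₀).add (isInvariantVal1_integral_comp φ₁)

theorem isContinuousVal1_representation (hφ₀ : ContinuousOn φ₀ (Ici 0))
    (hφ₁ : ContinuousOn φ₁ (Ici 0)) (hδ : 0 < δ) (hφδ : ∀ t ∈ Icc 0 δ, φ₁ t = 0) :
    IsContinuousVal1 fun f => φ₀ (⨆ x, f x) + ∫ x, φ₁ (f x) :=
  (isContinuousVal1_comp_iSup hφ₀).add (isContinuousVal1_integral_comp hφ₁ hδ hφδ)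

theorem IsValuation1.eq_representation (hμ : IsValuation1 μ) (hinv : IsTranslationInvariant μ)
    (hcont : IsContinuousVal1 μ) {f : ℝ → ℝ} (hf : QuasiConcave1 f) :
    μ f = pointProfile μ (⨆ x, f x) + ∫ x, lengthProfile μ (f x) := by
  obtain ⟨δ, hδ, hzero⟩ := hμ.exists_lengthProfile_eq_zero hinv hcont
  have hφ₀ := continuousOn_pointProfile hcont
  have hφ₁ := continuousOn_lengthProfile hcont
  refine hμ.eq_of_eq_on_stepFun hcont
    (isValuation1_representation hμ.pointProfile_zero hφ₁ hδ hzero)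
    (isContinuousVal1_representation hφ₀ hφ₁ hδ hzero) (fun t K ht hK hconv hne => ?_) hf
  have hKIcc : K = Icc (sInf K) (sSup K) :=
    eq_Icc_of_connected_compact ⟨hne, hconv.isPreconnected⟩ hK
  have hab : sInf K ≤ sSup K := nonempty_Icc.1 (hKIcc ▸ hne)
  rw [hKIcc, hμ.apply_stepFun_Icc hinv hcont ht hab,
    iSup_stepFun_add_integral hμ.lengthProfile_zero ht hab]

end Representation

theorem characterization_valuations_dim_one_general (μ : (ℝ → ℝ) → ℝ) :
    List.TFAE [
      IsValuation1 μ ∧ IsTranslationInvariant μ ∧ IsContinuousVal1 μ,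
      IsValuation1 μ ∧ IsInvariantVal1 μ ∧ IsContinuousVal1 μ,
      ∃ φ₀ φ₁ : ℝ → ℝ, ∃ δ > (0 : ℝ),
        ContinuousOn φ₀ (Ici 0) ∧ φ₀ 0 = 0 ∧
        ContinuousOn φ₁ (Ici 0) ∧ (∀ t ∈ Icc (0 : ℝ) δ, φ₁ t = 0) ∧
        ∀ f : ℝ → ℝ, QuasiConcave1 f → μ f = φ₀ (sSup (range f)) + ∫ x, φ₁ (f x)] := by
  tfae_have 2 → 1 := fun ⟨hμ, hinv, hcont⟩ => ⟨hμ, hinv.isTranslationInvariant, hcont⟩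
  tfae_have 1 → 3 := fun ⟨hμ, hinv, hcont⟩ =>
    let ⟨δ, hδ, hzero⟩ := hμ.exists_lengthProfile_eq_zero hinv hcont
    ⟨pointProfile μ, lengthProfile μ, δ, hδ, continuousOn_pointProfile hcont, hμ.pointProfile_zero,
      continuousOn_lengthProfile hcont, hzero, fun _ hf => hμ.eq_representation hinv hcont hf⟩
  tfae_have 3 → 2 := fun ⟨φ₀, φ₁, δ, hδ, hφ₀, hφ₀_zero, hφ₁, hφδ, hrep⟩ =>
    ⟨(isValuation1_representation hφ₀_zero hφ₁ hδ hφδ).congr hrep,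
      (isInvariantVal1_representation φ₀ φ₁).congr hrep,
      (isContinuousVal1_representation hφ₀ hφ₁ hδ hφδ).congr hrep⟩
  tfae_finish

/-- Characterization of invariant continuous valuations on `C^1`:
`μ` is an invariant and continuous valuation if and only if
`μ(f) = φ₀(M(f)) + ∫_ℝ φ₁(f(x)) dx`, where `M(f) = sup f` (attained as a maximum),
`φ₀ : [0,∞) → ℝ` is continuous with `φ₀(0) = 0` and `φ₁ : [0,∞) → ℝ` is continuous
and vanishes on `[0,δ]` for some `δ > 0`. -/
theorem characterization_valuations_dim_one (μ : (ℝ → ℝ) → ℝ) :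
    (IsValuation1 μ ∧ IsInvariantVal1 μ ∧ IsContinuousVal1 μ) ↔
    ∃ φ₀ φ₁ : ℝ → ℝ, ∃ δ > (0:ℝ),
      ContinuousOn φ₀ (Set.Ici 0) ∧ φ₀ 0 = 0 ∧
      ContinuousOn φ₁ (Set.Ici 0) ∧ (∀ t ∈ Set.Icc (0:ℝ) δ, φ₁ t = 0) ∧
      ∀ f : ℝ → ℝ, QuasiConcave1 f →
        μ f = φ₀ (sSup (Set.range f)) + ∫ x, φ₁ (f x) :=
  (characterization_valuations_dim_one_general μ).out 1 2

end
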